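/- Fix an integer d ≥ 1 and a real number m with 0 < m < 2. Then there exists ε > 0 with the following property: for every finite-dimensional complex Hilbert space H, every Clifford system (c_1, …, c_d, γ) on H, and every norm-continuous path t ∈ [0,1] ↦ (U_1(t), …, U_d(t)) of d-tuples of unitaries on H, each commuting with every c_j and with γ and satisfying ‖U_j(t) U_l(t) − U_l(t) U_j(t)‖ < ε for all t, j, l, the operator D_t(1, m) built from (U_1(t), …, U_d(t)) is invertible for every t and the integer 𝐈(D_t(1, m)) is independent of t; moreover, if U_1(1), …, U_d(1) pairwise commute, then 𝐈(D_0(1, m)) = 0. -/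

import Mathlib

noncomputable section

/-- A Clifford system `(c_1, …, c_d, γ)` on a complex Hilbert space `H`:
`c_j* = -c_j`, `c_j c_l + c_l c_j = -2 δ_{jl} 1`, `γ* = γ`, `γ² = 1`, `γ c_j = -c_j γ`. -/
structure CliffordSystem (H : Type*) [NormedAddCommGroup H] [InnerProductSpace ℂ H]
    [CompleteSpace H] (d : ℕ) where
  c : Fin d → H →L[ℂ] H
  γ : H →L[ℂ] H
  c_skew : ∀ j, star (c j) = -c j
  c_rel : ∀ j l, c j * c l + c l * c j =
    if j = l then (-2 : ℂ) • (1 : H →L[ℂ] H) else 0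
  γ_sa : star γ = γ
  γ_sq : γ * γ = 1
  γ_anticomm : ∀ j, γ * c j = -(c j * γ)

variable {H : Type*} [NormedAddCommGroup H] [InnerProductSpace ℂ H] [CompleteSpace H]

/-- `x = (U - U*)/(2i)`, the "imaginary part" of a unitary `U`. -/
def xPart (U : H →L[ℂ] H) : H →L[ℂ] H := ((2 * Complex.I)⁻¹ : ℂ) • (U - star U)

/-- `y = (U + U*)/2`, the "real part" of a unitary `U`. -/
def yPart (U : H →L[ℂ] H) : H →L[ℂ] H := ((2 : ℂ)⁻¹ : ℂ) • (U + star U)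

/-- The massive hermitian Wilson--Dirac operator
`D(κ, m) = κ·Σ_j i x_j c_j + γ·(κ·Σ_j (y_j − 1) + m)`. -/
def wilsonDirac {d : ℕ} (cs : CliffordSystem H d) (U : Fin d → H →L[ℂ] H)
    (κ m : ℝ) : H →L[ℂ] H :=
  (κ : ℂ) • (∑ j, Complex.I • (xPart (U j) * cs.c j)) +
    cs.γ * ((κ : ℂ) • (∑ j, (yPart (U j) - 1)) + (m : ℂ) • (1 : H →L[ℂ] H))

/-- `f_m(k)² = Σ_j sin²(2π k_j) + (Σ_j (cos(2π k_j) − 1) + m)²`. -/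
def fmSq (d : ℕ) (m : ℝ) (k : Fin d → ℝ) : ℝ :=
  ∑ j, Real.sin (2 * Real.pi * k j) ^ 2 +
    (∑ j, (Real.cos (2 * Real.pi * k j) - 1) + m) ^ 2

/-- `E_{>0}(A)`: the sum of the eigenspaces of `A` with positive (real) eigenvalue. -/
def posSpace (A : H →L[ℂ] H) : Submodule ℂ H :=
  ⨆ (μ : ℝ) (_ : 0 < μ), Module.End.eigenspace (A.toLinearMap) (μ : ℂ)

/-- `E_{<0}(A)`: the sum of the eigenspaces of `A` with negative (real) eigenvalue. -/
def negSpace (A : H →L[ℂ] H) : Submodule ℂ H :=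
  ⨆ (μ : ℝ) (_ : μ < 0), Module.End.eigenspace (A.toLinearMap) (μ : ℂ)

/-- `𝐈(A) = (dim E_{>0}(A) − dim E_{<0}(A))/2`, a priori a half-integer. -/
def Ind (A : H →L[ℂ] H) : ℚ :=
  ((Module.finrank ℂ (posSpace A) : ℚ) - (Module.finrank ℂ (negSpace A) : ℚ)) / 2

end

open scoped InnerProductSpace

section Index

variable {H : Type*} [NormedAddCommGroup H] [InnerProductSpace ℂ H]

lemma negSpace_eq_posSpace_neg (A : H →L[ℂ] H) : negSpace A = posSpace (-A) := by
  have h (μ : ℝ) : Module.End.eigenspace (-A).toLinearMap (μ : ℂ) =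
      Module.End.eigenspace A.toLinearMap ((-μ : ℝ) : ℂ) := by
    ext v
    simp [neg_eq_iff_eq_neg]
  unfold negSpace posSpace
  simp_rw [h]
  refine le_antisymm (iSup₂_le fun μ hμ => ?_) (iSup₂_le fun μ hμ => ?_)
  · refine le_trans (le_of_eq ?_) (le_iSup₂_of_le (-μ) (by linarith) le_rfl)
    rw [neg_neg]
  · exact le_iSup₂_of_le (f := fun (ν : ℝ) (_ : ν < 0) =>
      Module.End.eigenspace A.toLinearMap (ν : ℂ)) (-μ) (by linarith) le_rfl

variable [FiniteDimensional ℂ H]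

/-- The index vanishes when an injective operator anticommutes with `A`. -/
lemma Ind_eq_zero_of_anticommute {A W : H →L[ℂ] H} (hW : Function.Injective W)
    (h : W * A = -(A * W)) : Ind A = 0 := by
  have hmap (μ : ℝ) : (Module.End.eigenspace A.toLinearMap (μ : ℂ)).map W.toLinearMap ≤
      Module.End.eigenspace A.toLinearMap ((-μ : ℝ) : ℂ) := by
    rintro _ ⟨v, hv, rfl⟩
    have h1 : A v = (μ : ℂ) • v := Module.End.mem_eigenspace_iff.mp hv
    have h2 : W (A v) = -(A (W v)) := congrArg (fun T : H →L[ℂ] H => T v) h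
    rw [Module.End.mem_eigenspace_iff]
    rw [h1, map_smul] at h2
    simp [h2]
  have hpos : (posSpace A).map W.toLinearMap ≤ negSpace A := by
    simp only [posSpace, Submodule.map_iSup]
    exact iSup₂_le fun μ hμ => (hmap μ).trans (le_iSup₂_of_le (f := fun (ν : ℝ) (_ : ν < 0) =>
      Module.End.eigenspace A.toLinearMap (ν : ℂ)) (-μ) (by linarith) le_rfl)
  have hneg : (negSpace A).map W.toLinearMap ≤ posSpace A := by
    simp only [negSpace, Submodule.map_iSup]
    exact iSup₂_le fun μ hμ => (hmap μ).trans (le_iSup₂_of_le (f := fun (ν : ℝ) (_ : 0 < ν) =>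
      Module.End.eigenspace A.toLinearMap (ν : ℂ)) (-μ) (by linarith) le_rfl)
  have h1 := Submodule.finrank_mono hpos
  have h2 := Submodule.finrank_mono hneg
  rw [← (Submodule.equivMapOfInjective W.toLinearMap hW _).finrank_eq] at h1 h2
  rw [Ind, le_antisymm h1 h2, sub_self, zero_div]

variable [CompleteSpace H]

/-- A self-adjoint operator with `g ‖v‖ ≤ ‖A v‖` is bounded below by `g` on its positive space. -/
lemma re_inner_ge_of_mem_posSpace {A : H →L[ℂ] H} (hA : IsSelfAdjoint A) {g : ℝ}
    (hg : ∀ v, g * ‖v‖ ≤ ‖A v‖) {v : H} (hv : v ∈ posSpace A) :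
    g * ‖v‖ ^ 2 ≤ (⟪v, A v⟫_ℂ).re := by
  have hS : A.toLinearMap.IsSymmetric := hA.isSymmetric
  set e := hS.eigenvectorBasis rfl with he
  set ev := hS.eigenvalues rfl with hev
  have hAe (i) : A (e i) = (ev i : ℂ) • e i := hS.apply_eigenvectorBasis rfl i
  have hinner (i) : ⟪e i, A v⟫_ℂ = ev i * ⟪e i, v⟫_ℂ := by
    have h : ⟪A (e i), v⟫_ℂ = ⟪e i, A v⟫_ℂ := hS (e i) v
    rw [← h, hAe, inner_smul_left, Complex.conj_ofReal]
  have hzero (i) (hi : ev i ≤ 0) : ⟪e i, v⟫_ℂ = 0 := by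
    have hle : posSpace A ≤ (ℂ ∙ e i)ᗮ := by
      refine iSup₂_le fun μ hμ w hw => ?_
      rw [Submodule.mem_orthogonal_singleton_iff_inner_right]
      have h1 : A w = (μ : ℂ) • w := Module.End.mem_eigenspace_iff.mp hw
      have h2 : ⟪A (e i), w⟫_ℂ = ⟪e i, A w⟫_ℂ := hS (e i) w
      rw [hAe, h1, inner_smul_left, inner_smul_right, Complex.conj_ofReal] at h2
      have h3 : ((ev i - μ : ℝ) : ℂ) * ⟪e i, w⟫_ℂ = 0 := by
        push_cast; linear_combination h2
      refine (mul_eq_zero.mp h3).resolve_left ?_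
      rw [Complex.ofReal_eq_zero]
      linarith
    exact (Submodule.mem_orthogonal_singleton_iff_inner_right).mp (hle hv)
  have hgap (i) (hi : 0 < ev i) : g ≤ ev i := by
    have := hg (e i)
    rw [hAe, norm_smul, e.norm_eq_one, Complex.norm_real, Real.norm_of_nonneg hi.le] at this
    linarith
  rw [← e.sum_sq_norm_inner_right v, ← e.sum_inner_mul_inner v (A v), Complex.re_sum,
    Finset.mul_sum]
  refine Finset.sum_le_sum fun i _ => ?_
  have hterm : (⟪v, e i⟫_ℂ * ⟪e i, A v⟫_ℂ).re = ev i * ‖⟪e i, v⟫_ℂ‖ ^ 2 := by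
    have h1 : ⟪v, e i⟫_ℂ * ⟪e i, A v⟫_ℂ = ((ev i * ‖⟪e i, v⟫_ℂ‖ ^ 2 : ℝ) : ℂ) := by
      rw [hinner, ← inner_conj_symm v (e i), mul_left_comm, RCLike.conj_mul]
      push_cast
      rfl
    rw [h1, Complex.ofReal_re]
  rw [hterm]
  rcases le_or_gt (ev i) 0 with hi | hi
  · simp [hzero i hi]
  · exact mul_le_mul_of_nonneg_right (hgap i hi) (by positivity)

lemma re_inner_le_of_mem_negSpace {A : H →L[ℂ] H} (hA : IsSelfAdjoint A) {g : ℝ}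
    (hg : ∀ v, g * ‖v‖ ≤ ‖A v‖) {v : H} (hv : v ∈ negSpace A) :
    (⟪v, A v⟫_ℂ).re ≤ -(g * ‖v‖ ^ 2) := by
  rw [negSpace_eq_posSpace_neg] at hv
  have := re_inner_ge_of_mem_posSpace hA.neg (g := g) (by simpa using hg) hv
  simp only [neg_apply, inner_neg_right, Complex.neg_re] at this
  linarith

/-- The positive and negative spaces of close gapped operators meet trivially. -/
lemma disjoint_posSpace_negSpace {A B : H →L[ℂ] H} (hA : IsSelfAdjoint A) (hB : IsSelfAdjoint B)
    {g : ℝ} (hg : 0 < g) (hgA : ∀ v, g * ‖v‖ ≤ ‖A v‖) (hgB : ∀ v, g * ‖v‖ ≤ ‖B v‖)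
    (hAB : ‖A - B‖ < g) : Disjoint (posSpace A) (negSpace B) := by
  rw [Submodule.disjoint_def]
  intro v hv hv'
  have h1 := re_inner_ge_of_mem_posSpace hA hgA hv
  have h2 := re_inner_le_of_mem_negSpace hB hgB hv'
  have h3 : (⟪v, (A - B) v⟫_ℂ).re ≤ ‖A - B‖ * ‖v‖ ^ 2 := by
    refine (Complex.re_le_norm _).trans ((norm_inner_le_norm _ _).trans ?_)
    nlinarith [(A - B).le_opNorm v, norm_nonneg v]
  rw [sub_apply, inner_sub_right, Complex.sub_re] at h3
  by_contra hne
  have : 0 < ‖v‖ := norm_pos_iff.mpr hne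
  nlinarith [pow_pos this 2]

lemma finrank_posSpace_add_negSpace {A : H →L[ℂ] H} (hA : IsSelfAdjoint A) {g : ℝ}
    (hg : 0 < g) (hgA : ∀ v, g * ‖v‖ ≤ ‖A v‖) :
    Module.finrank ℂ (posSpace A) + Module.finrank ℂ (negSpace A) = Module.finrank ℂ H := by
  refine Submodule.finrank_add_eq_of_isCompl
    ⟨disjoint_posSpace_negSpace hA hA hg hgA hgA (by simpa using hg), ?_⟩
  have hS : A.toLinearMap.IsSymmetric := hA.isSymmetric
  set e := hS.eigenvectorBasis rfl with he
  set ev := hS.eigenvalues rfl with hev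
  have hmem (i) : e i ∈ Module.End.eigenspace A.toLinearMap (ev i : ℂ) :=
    Module.End.mem_eigenspace_iff.mpr (hS.apply_eigenvectorBasis rfl i)
  rw [codisjoint_iff, eq_top_iff, ← e.toBasis.span_eq, Submodule.span_le]
  rintro _ ⟨i, rfl⟩
  rw [e.coe_toBasis]
  rcases lt_trichotomy (ev i) 0 with hi | hi | hi
  · exact Submodule.mem_sup_right (Submodule.mem_iSup_of_mem _ (Submodule.mem_iSup_of_mem hi (hmem i)))
  · have h := hgA (e i)
    have h0 : A (e i) = 0 := by
      have := Module.End.mem_eigenspace_iff.mp (hmem i)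
      simpa [hi] using this
    rw [h0, e.norm_eq_one, norm_zero] at h
    linarith
  · exact Submodule.mem_sup_left (Submodule.mem_iSup_of_mem _ (Submodule.mem_iSup_of_mem hi (hmem i)))

/-- The index is locally constant on gapped self-adjoint operators. -/
lemma Ind_eq_of_norm_sub_lt {A B : H →L[ℂ] H} (hA : IsSelfAdjoint A) (hB : IsSelfAdjoint B)
    {g : ℝ} (hg : 0 < g) (hgA : ∀ v, g * ‖v‖ ≤ ‖A v‖) (hgB : ∀ v, g * ‖v‖ ≤ ‖B v‖)
    (hAB : ‖A - B‖ < g) : Ind A = Ind B := by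
  have h1 := Submodule.finrank_add_finrank_le_of_disjoint
    (disjoint_posSpace_negSpace hA hB hg hgA hgB hAB)
  have h2 := Submodule.finrank_add_finrank_le_of_disjoint
    (disjoint_posSpace_negSpace hB hA hg hgB hgA (by rwa [norm_sub_rev]))
  have h3 := finrank_posSpace_add_negSpace hA hg hgA
  have h4 := finrank_posSpace_add_negSpace hB hg hgB
  have h5 : Module.finrank ℂ (posSpace A) = Module.finrank ℂ (posSpace B) := by omega
  have h6 : Module.finrank ℂ (negSpace A) = Module.finrank ℂ (negSpace B) := by omega
  rw [Ind, Ind, h5, h6]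

end Index

section Commutator

variable {A : Type*} [NormedRing A]

lemma norm_sum_commutator_le {ι : Type*} (s : Finset ι) (a : ι → A) (u : A) {ε : ℝ}
    (h : ∀ j ∈ s, ‖a j * u - u * a j‖ ≤ ε) :
    ‖(∑ j ∈ s, a j) * u - u * ∑ j ∈ s, a j‖ ≤ s.card * ε := by
  rw [Finset.sum_mul, Finset.mul_sum, ← Finset.sum_sub_distrib]
  simpa using norm_sum_le_of_le s h

lemma norm_sq_commutator_le (a u : A) :
    ‖a * a * u - u * (a * a)‖ ≤ 2 * ‖a‖ * ‖a * u - u * a‖ := by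
  have h : a * a * u - u * (a * a) = a * (a * u - u * a) + (a * u - u * a) * a := by noncomm_ring
  rw [h]
  refine (norm_add_le _ _).trans ?_
  linarith [norm_mul_le a (a * u - u * a), norm_mul_le (a * u - u * a) a]

variable [StarRing A] [CStarRing A]

lemma norm_le_one_of_mem_unitary {u : A} (hu : u ∈ unitary A) : ‖u‖ ≤ 1 := by
  rcases subsingleton_or_nontrivial A with h | h
  · simp [Subsingleton.elim u 0]
  · exact (CStarRing.norm_of_mem_unitary hu).le

lemma norm_star_commutator {u : A} (hu : u ∈ unitary A) (v : A) :
    ‖star u * v - v * star u‖ = ‖u * v - v * u‖ := by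
  have h : star u * v - v * star u = star u * (v * u - u * v) * star u := by
    have h1 := Unitary.star_mul_self_of_mem hu
    have h2 := Unitary.mul_star_self_of_mem hu
    have e : star u * (v * u - u * v) * star u =
      star u * v * (u * star u) - (star u * u) * v * star u := by noncomm_ring
    rw [e, h1, h2]; noncomm_ring
  rw [h, CStarRing.norm_mul_mem_unitary _ (Unitary.star_mem hu),
    CStarRing.norm_mem_unitary_mul _ (Unitary.star_mem hu), norm_sub_rev]

end Commutator

section Parts

variable {H : Type*} [NormedAddCommGroup H] [InnerProductSpace ℂ H] [CompleteSpace H]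

/-- `(1 - y)/2`, a positive contraction. -/
noncomputable def defectPart (U : H →L[ℂ] H) : H →L[ℂ] H := (2⁻¹ : ℂ) • (1 - yPart U)

lemma yPart_eq (U : H →L[ℂ] H) : yPart U = 1 - (2 : ℂ) • defectPart U := by
  simp [defectPart, smul_smul]

lemma defectPart_eq (U : H →L[ℂ] H) :
    defectPart U = (4⁻¹ : ℂ) • ((2 : ℂ) • 1 - U - star U) := by
  unfold defectPart yPart
  module

lemma star_xPart (U : H →L[ℂ] H) : star (xPart U) = xPart U := by
  have : star ((2 * Complex.I)⁻¹ : ℂ) = -(2 * Complex.I)⁻¹ := by simp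
  rw [xPart, star_smul, this, star_sub, star_star]
  module

lemma star_yPart (U : H →L[ℂ] H) : star (yPart U) = yPart U := by
  simp [yPart, star_smul, add_comm]

lemma star_defectPart (U : H →L[ℂ] H) : star (defectPart U) = defectPart U := by
  simp [defectPart, star_smul, star_yPart]

lemma Commute.xPart_left {U T : H →L[ℂ] H} (hU : U ∈ unitary (H →L[ℂ] H)) (h : Commute U T) :
    Commute (xPart U) T := by
  have h' : Commute (star U) T := by
    have := norm_star_commutator hU T
    rw [h.eq, sub_self, norm_zero, norm_eq_zero, sub_eq_zero] at this
    exact this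
  exact (h.sub_left h').smul_left _

lemma Commute.yPart_left {U T : H →L[ℂ] H} (hU : U ∈ unitary (H →L[ℂ] H)) (h : Commute U T) :
    Commute (yPart U) T := by
  have h' : Commute (star U) T := by
    have := norm_star_commutator hU T
    rw [h.eq, sub_self, norm_zero, norm_eq_zero, sub_eq_zero] at this
    exact this
  exact (h.add_left h').smul_left _

variable {U : H →L[ℂ] H} (hU : U ∈ unitary (H →L[ℂ] H))
include hU

lemma defectPart_eq_star_mul_self :
    defectPart U = star ((2⁻¹ : ℂ) • (1 - U)) * ((2⁻¹ : ℂ) • (1 - U)) := by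
  have h1 := Unitary.star_mul_self_of_mem hU
  rw [defectPart_eq, star_smul, smul_mul_smul_comm, star_sub, star_one, sub_mul, mul_sub, mul_sub,
    h1]
  norm_num
  module

lemma one_sub_defectPart_eq_star_mul_self :
    1 - defectPart U = star ((2⁻¹ : ℂ) • (1 + U)) * ((2⁻¹ : ℂ) • (1 + U)) := by
  have h1 := Unitary.star_mul_self_of_mem hU
  rw [defectPart_eq, star_smul, smul_mul_smul_comm, star_add, star_one, add_mul, mul_add, mul_add,
    h1]
  norm_num
  module

lemma xPart_mul_self :
    xPart U * xPart U = (4 : ℂ) • (defectPart U - defectPart U * defectPart U) := by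
  have h1 := Unitary.star_mul_self_of_mem hU
  have h2 := Unitary.mul_star_self_of_mem hU
  have hc : (2 * Complex.I)⁻¹ * (2 * Complex.I)⁻¹ = (-(4⁻¹) : ℂ) := by
    rw [← mul_inv, show (2 * Complex.I) * (2 * Complex.I) = -4 by
      linear_combination 4 * Complex.I_mul_I]
    norm_num
  rw [xPart, smul_mul_smul_comm, hc, defectPart_eq, smul_mul_smul_comm]
  simp only [sub_mul, mul_sub, smul_mul_assoc, mul_smul_comm, one_mul, mul_one, h1, h2]
  module

lemma norm_half_one_sub_le : ‖(2⁻¹ : ℂ) • (1 - U)‖ ≤ 1 := by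
  have h := norm_le_one_of_mem_unitary hU
  have h1 : ‖(1 : H →L[ℂ] H)‖ ≤ 1 := norm_le_one_of_mem_unitary (one_mem _)
  have h2 := norm_sub_le 1 U
  rw [norm_smul]
  norm_num
  linarith

lemma norm_half_one_add_le : ‖(2⁻¹ : ℂ) • (1 + U)‖ ≤ 1 := by
  have h := norm_le_one_of_mem_unitary hU
  have h1 : ‖(1 : H →L[ℂ] H)‖ ≤ 1 := norm_le_one_of_mem_unitary (one_mem _)
  have h2 := norm_add_le 1 U
  rw [norm_smul]
  norm_num
  linarith

lemma norm_defectPart_le : ‖defectPart U‖ ≤ 1 := by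
  have h := norm_half_one_sub_le hU
  rw [defectPart_eq_star_mul_self hU, CStarRing.norm_star_mul_self]
  exact mul_le_one₀ h (norm_nonneg _) h

lemma norm_defectPart_commutator_le (T : H →L[ℂ] H) :
    ‖defectPart U * T - T * defectPart U‖ ≤ ‖U * T - T * U‖ := by
  have h : defectPart U * T - T * defectPart U =
      -(4⁻¹ : ℂ) • ((U * T - T * U) + (star U * T - T * star U)) := by
    rw [defectPart_eq]
    simp only [sub_mul, mul_sub, smul_mul_assoc, mul_smul_comm, one_mul, mul_one]
    module
  have h2 := norm_add_le (U * T - T * U) (star U * T - T * star U)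
  rw [norm_star_commutator hU] at h2
  rw [h, norm_smul]
  norm_num
  linarith [norm_nonneg (U * T - T * U)]

lemma norm_xPart_commutator_le (T : H →L[ℂ] H) :
    ‖xPart U * T - T * xPart U‖ ≤ ‖U * T - T * U‖ := by
  have h : xPart U * T - T * xPart U =
      (2 * Complex.I)⁻¹ • ((U * T - T * U) - (star U * T - T * star U)) := by
    rw [xPart]
    simp only [sub_mul, mul_sub, smul_mul_assoc, mul_smul_comm]
    module
  have h2 := norm_sub_le (U * T - T * U) (star U * T - T * star U)
  rw [norm_star_commutator hU] at h2
  rw [h, norm_smul]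
  norm_num
  linarith [norm_nonneg (U * T - T * U)]

end Parts

section Positivity

variable {H : Type*} [NormedAddCommGroup H] [InnerProductSpace ℂ H]

lemma neg_norm_mul_le_re_inner (A : H →L[ℂ] H) (v : H) :
    -(‖A‖ * ‖v‖ ^ 2) ≤ (⟪v, A v⟫_ℂ).re := by
  have h1 := Complex.abs_re_le_norm ⟪v, A v⟫_ℂ
  have h2 := norm_inner_le_norm (𝕜 := ℂ) v (A v)
  have h3 := A.le_opNorm v
  have h4 := neg_abs_le (⟪v, A v⟫_ℂ).re
  nlinarith [norm_nonneg v]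

variable [CompleteSpace H]

lemma inner_star_mul_apply (r A : H →L[ℂ] H) (v : H) :
    ⟪v, (star r * A) v⟫_ℂ = ⟪r v, A v⟫_ℂ := by
  rw [mul_apply_eq_comp, ContinuousLinearMap.star_eq_adjoint,
    ContinuousLinearMap.adjoint_inner_right]

lemma re_inner_star_apply (A : H →L[ℂ] H) (v : H) :
    (⟪v, star A v⟫_ℂ).re = (⟪v, A v⟫_ℂ).re := by
  rw [ContinuousLinearMap.star_eq_adjoint, ContinuousLinearMap.adjoint_inner_right,
    ← inner_conj_symm, Complex.conj_re]

lemma re_inner_star_mul_self (r : H →L[ℂ] H) (v : H) :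
    (⟪v, (star r * r) v⟫_ℂ).re = ‖r v‖ ^ 2 := by
  rw [inner_star_mul_apply]
  exact inner_self_eq_norm_sq (𝕜 := ℂ) (r v)

/-- Moving a contraction past `A` costs at most the norm of the commutator. -/
lemma re_inner_star_mul_self_mul_ge {r : H →L[ℂ] H} (hr : ‖r‖ ≤ 1) (A : H →L[ℂ] H) (v : H) :
    (⟪r v, A (r v)⟫_ℂ).re - ‖r * A - A * r‖ * ‖v‖ ^ 2 ≤ (⟪v, (star r * r * A) v⟫_ℂ).re := by
  have h : star r * r * A = star r * (A * r) + star r * (r * A - A * r) := by noncomm_ring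
  have h1 := neg_norm_mul_le_re_inner (star r * (r * A - A * r)) v
  have h2 : ‖star r * (r * A - A * r)‖ ≤ ‖r * A - A * r‖ := by
    refine (norm_mul_le _ _).trans ?_
    rw [norm_star]
    exact mul_le_of_le_one_left (norm_nonneg _) hr
  rw [h, add_apply, inner_add_right, Complex.add_re, inner_star_mul_apply r (A * r),
    mul_apply_eq_comp]
  nlinarith [sq_nonneg ‖v‖]

variable {ι : Type*}

/-- The sum of the defects `(1 - y_j)/2` over `s`. -/
noncomputable def defectSum (U : ι → H →L[ℂ] H) (s : Finset ι) : H →L[ℂ] H :=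
  ∑ j ∈ s, defectPart (U j)

/-- The off-diagonal part of the square of `defectSum`. -/
noncomputable def defectPairs (U : ι → H →L[ℂ] H) (s : Finset ι) : H →L[ℂ] H :=
  defectSum U s * defectSum U s - ∑ j ∈ s, defectPart (U j) * defectPart (U j)

lemma star_defectSum (U : ι → H →L[ℂ] H) (s : Finset ι) :
    star (defectSum U s) = defectSum U s := by
  simp [defectSum, star_defectPart]

variable {U : ι → H →L[ℂ] H} (hU : ∀ j, U j ∈ unitary (H →L[ℂ] H))
include hU

lemma re_inner_defectSum_nonneg (s : Finset ι) (v : H) :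
    0 ≤ (⟪v, defectSum U s v⟫_ℂ).re := by
  rw [defectSum, sum_apply, inner_sum, Complex.re_sum]
  refine Finset.sum_nonneg fun j _ => ?_
  rw [defectPart_eq_star_mul_self (hU j), re_inner_star_mul_self]
  positivity

lemma norm_defectSum_le (s : Finset ι) : ‖defectSum U s‖ ≤ s.card := by
  simpa [defectSum] using norm_sum_le_of_le s fun j _ => norm_defectPart_le (hU j)

variable {ε : ℝ} (hε : ∀ j l, ‖U j * U l - U l * U j‖ ≤ ε)
include hε

lemma norm_defectSum_commutator_le (s : Finset ι) (a : ι) :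
    ‖defectSum U s * U a - U a * defectSum U s‖ ≤ s.card * ε :=
  norm_sum_commutator_le s _ _ fun j _ =>
    (norm_defectPart_commutator_le (hU j) _).trans (hε j a)

lemma norm_defectSum_defectPart_commutator_le (s : Finset ι) (a : ι) :
    ‖defectSum U s * defectPart (U a) - defectPart (U a) * defectSum U s‖ ≤ s.card * ε := by
  rw [norm_sub_rev]
  refine (norm_defectPart_commutator_le (hU a) _).trans ?_
  rw [norm_sub_rev]
  exact norm_defectSum_commutator_le hU hε s a

lemma norm_defectPairs_commutator_le (s : Finset ι) (a : ι) :
    ‖defectPairs U s * U a - U a * defectPairs U s‖ ≤ (2 * s.card ^ 2 + 2 * s.card) * ε := by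
  have h0 : 0 ≤ ε := (norm_nonneg _).trans (hε a a)
  have h1 := norm_sq_commutator_le (defectSum U s) (U a)
  have h2 := norm_defectSum_commutator_le hU hε s a
  have h3 := norm_defectSum_le hU s
  have h4 := norm_sum_commutator_le s (fun j => defectPart (U j) * defectPart (U j)) (U a)
    (ε := 2 * ε) fun j _ => by
      have e1 := norm_sq_commutator_le (defectPart (U j)) (U a)
      have e2 := (norm_defectPart_commutator_le (hU j) (U a)).trans (hε j a)
      have e3 := norm_defectPart_le (hU j)
      have e4 := mul_le_mul e3 e2 (norm_nonneg _) zero_le_one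
      linarith
  have h5 := mul_le_mul h3 h2 (norm_nonneg _) (Nat.cast_nonneg _)
  have h6 : defectPairs U s * U a - U a * defectPairs U s =
      (defectSum U s * defectSum U s * U a - U a * (defectSum U s * defectSum U s)) -
      ((∑ j ∈ s, defectPart (U j) * defectPart (U j)) * U a -
        U a * ∑ j ∈ s, defectPart (U j) * defectPart (U j)) := by
    rw [defectPairs, sub_mul, mul_sub]
    abel
  rw [h6]
  refine (norm_sub_le _ _).trans ?_
  linarith

lemma defectPairs_ge [DecidableEq ι] (s : Finset ι) (v : H) :
    -((s.card : ℝ) ^ 2 * ε * ‖v‖ ^ 2) ≤ (⟪v, defectPairs U s v⟫_ℂ).re := by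
  induction s using Finset.induction_on with
  | empty => simp [defectPairs, defectSum]
  | insert a s ha ih =>
    have h0 : 0 ≤ ε := (norm_nonneg _).trans (hε a a)
    set b := defectPart (U a) with hb
    set T := defectSum U s with hT
    have hrec : defectPairs U (insert a s) = defectPairs U s + b * T + star (b * T) := by
      rw [star_mul, star_defectSum, star_defectPart, defectPairs, defectPairs, defectSum,
        Finset.sum_insert ha, Finset.sum_insert ha, ← defectSum, ← hT, ← hb]
      noncomm_ring
    have hbT : -(2⁻¹ * (s.card * ε) * ‖v‖ ^ 2) ≤ (⟪v, (b * T) v⟫_ℂ).re := by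
      have h1 := re_inner_star_mul_self_mul_ge (norm_half_one_sub_le (hU a)) T v
      rw [← defectPart_eq_star_mul_self (hU a), ← hb] at h1
      have h2 := re_inner_defectSum_nonneg hU s (((2⁻¹ : ℂ) • (1 - U a)) v)
      have h3 : ‖((2⁻¹ : ℂ) • (1 - U a)) * T - T * ((2⁻¹ : ℂ) • (1 - U a))‖ ≤
          2⁻¹ * (s.card * ε) := by
        have e : ((2⁻¹ : ℂ) • (1 - U a)) * T - T * ((2⁻¹ : ℂ) • (1 - U a)) =
            (2⁻¹ : ℂ) • (T * U a - U a * T) := by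
          simp only [smul_mul_assoc, mul_smul_comm, sub_mul, mul_sub, one_mul, mul_one]
          module
        rw [e, norm_smul]
        have := norm_defectSum_commutator_le hU hε s a
        norm_num
        linarith
      have h4 := mul_le_mul_of_nonneg_right h3 (sq_nonneg ‖v‖)
      linarith
    rw [hrec, add_apply, add_apply, inner_add_right, inner_add_right, Complex.add_re,
      Complex.add_re, re_inner_star_apply, Finset.card_insert_of_notMem ha]
    rw [Nat.cast_add, Nat.cast_one]
    have : 0 ≤ ε * ‖v‖ ^ 2 := by positivity
    nlinarith [mul_nonneg (Nat.cast_nonneg (α := ℝ) s.card) this]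

/-- An approximate Bonferroni inequality for almost commuting defects. -/
lemma one_sub_defectSum_add_defectPairs_ge [DecidableEq ι] (s : Finset ι) (v : H) :
    -(6 * (s.card : ℝ) ^ 3 * ε * ‖v‖ ^ 2) ≤
      (⟪v, (1 - defectSum U s + defectPairs U s) v⟫_ℂ).re := by
  induction s using Finset.induction_on generalizing v with
  | empty =>
    have := inner_self_nonneg (𝕜 := ℂ) (x := v)
    simpa [defectPairs, defectSum] using this
  | insert a s ha ih =>
    have h0 : 0 ≤ ε := (norm_nonneg _).trans (hε a a)
    set b := defectPart (U a) with hb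
    set T := defectSum U s with hT
    set Q := defectPairs U s with hQ
    set r := (2⁻¹ : ℂ) • (1 - U a) with hr
    set p := (2⁻¹ : ℂ) • (1 + U a) with hp
    have hrr : star r * r = b := (defectPart_eq_star_mul_self (hU a)).symm
    have hpp : star p * p = 1 - b := (one_sub_defectPart_eq_star_mul_self (hU a)).symm
    have hrec : 1 - defectSum U (insert a s) + defectPairs U (insert a s) =
        star p * p * (1 - T + Q) + star r * r * (T + Q) + (T * b - b * T) := by
      rw [hrr, hpp, defectPairs, defectSum, Finset.sum_insert ha, Finset.sum_insert ha,
        ← defectSum, ← hT, ← hb, hQ, defectPairs, ← hT]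
      noncomm_ring
    have hr1 : ‖r‖ ≤ 1 := norm_half_one_sub_le (hU a)
    have hp1 : ‖p‖ ≤ 1 := norm_half_one_add_le (hU a)
    have hTU := norm_defectSum_commutator_le hU hε s a
    have hQU := norm_defectPairs_commutator_le hU hε s a
    rw [← hT] at hTU
    rw [← hQ] at hQU
    have hpE : ‖p * (1 - T + Q) - (1 - T + Q) * p‖ ≤
        2⁻¹ * (s.card * ε + (2 * s.card ^ 2 + 2 * s.card) * ε) := by
      have e : p * (1 - T + Q) - (1 - T + Q) * p =
          (2⁻¹ : ℂ) • ((T * U a - U a * T) - (Q * U a - U a * Q)) := by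
        rw [hp]
        simp only [smul_mul_assoc, mul_smul_comm, sub_mul, mul_sub, add_mul, mul_add, one_mul,
          mul_one]
        module
      rw [e, norm_smul]
      have := norm_sub_le (T * U a - U a * T) (Q * U a - U a * Q)
      norm_num
      linarith
    have hrE : ‖r * (T + Q) - (T + Q) * r‖ ≤
        2⁻¹ * (s.card * ε + (2 * s.card ^ 2 + 2 * s.card) * ε) := by
      have e : r * (T + Q) - (T + Q) * r =
          (2⁻¹ : ℂ) • ((T * U a - U a * T) + (Q * U a - U a * Q)) := by
        rw [hr]
        simp only [smul_mul_assoc, mul_smul_comm, sub_mul, mul_sub, add_mul, mul_add, one_mul,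
          mul_one]
        module
      rw [e, norm_smul]
      have := norm_add_le (T * U a - U a * T) (Q * U a - U a * Q)
      norm_num
      linarith
    have hTb : ‖T * b - b * T‖ ≤ s.card * ε :=
      norm_defectSum_defectPart_commutator_le hU hε s a
    have hsum : ‖p v‖ ^ 2 + ‖r v‖ ^ 2 = ‖v‖ ^ 2 := by
      rw [← re_inner_star_mul_self, ← re_inner_star_mul_self, hrr, hpp, ← Complex.add_re,
        ← inner_add_right, ← add_apply, sub_add_cancel]
      exact inner_self_eq_norm_sq (𝕜 := ℂ) v
    have h1 := re_inner_star_mul_self_mul_ge hp1 (1 - T + Q) v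
    have h2 := re_inner_star_mul_self_mul_ge hr1 (T + Q) v
    have h3 := neg_norm_mul_le_re_inner (T * b - b * T) v
    have h4 := ih (p v)
    have h5 := re_inner_defectSum_nonneg hU s (r v)
    have h6 := defectPairs_ge hU hε s (r v)
    have h7 : (⟪r v, (T + Q) (r v)⟫_ℂ).re =
        (⟪r v, T (r v)⟫_ℂ).re + (⟪r v, Q (r v)⟫_ℂ).re := by
      rw [add_apply, inner_add_right, Complex.add_re]
    have k1 := mul_le_mul_of_nonneg_right hpE (sq_nonneg ‖v‖)
    have k2 := mul_le_mul_of_nonneg_right hrE (sq_nonneg ‖v‖)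
    have k3 := mul_le_mul_of_nonneg_right hTb (sq_nonneg ‖v‖)
    rw [hrec, add_apply, add_apply, inner_add_right, inner_add_right, Complex.add_re,
      Complex.add_re, Finset.card_insert_of_notMem ha]
    rw [Nat.cast_add, Nat.cast_one]
    have hn : (s.card : ℝ) ^ 2 ≤ 6 * (s.card : ℝ) ^ 3 := by
      rcases Nat.eq_zero_or_pos s.card with h | h
      · simp [h]
      · have : (1 : ℝ) ≤ s.card := by exact_mod_cast h
        nlinarith [sq_nonneg (s.card : ℝ)]
    have k4 : (s.card : ℝ) ^ 2 * ε * ‖r v‖ ^ 2 ≤ 6 * (s.card : ℝ) ^ 3 * ε * ‖r v‖ ^ 2 := by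
      gcongr
    have k5 : 6 * (s.card : ℝ) ^ 3 * ε * ‖p v‖ ^ 2 + 6 * (s.card : ℝ) ^ 3 * ε * ‖r v‖ ^ 2 =
        6 * (s.card : ℝ) ^ 3 * ε * ‖v‖ ^ 2 := by
      rw [← mul_add, hsum]
    have hev : 0 ≤ ε * ‖v‖ ^ 2 := by positivity
    have k6 := mul_nonneg (Nat.cast_nonneg (α := ℝ) s.card) hev
    have k7 := mul_nonneg (sq_nonneg (s.card : ℝ)) hev
    nlinarith

end Positivity

section WilsonDirac

variable {H : Type*} [NormedAddCommGroup H] [InnerProductSpace ℂ H] [CompleteSpace H] {d : ℕ}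

/-- The kinetic term `∑ i x_j c_j`. -/
noncomputable def kineticTerm (cs : CliffordSystem H d) (U : Fin d → H →L[ℂ] H) : H →L[ℂ] H :=
  ∑ j, Complex.I • (xPart (U j) * cs.c j)

/-- The mass term `∑ (y_j - 1) + m`. -/
noncomputable def massTerm (U : Fin d → H →L[ℂ] H) (m : ℝ) : H →L[ℂ] H :=
  ∑ j, (yPart (U j) - 1) + (m : ℂ) • (1 : H →L[ℂ] H)

lemma wilsonDirac_one (cs : CliffordSystem H d) (U : Fin d → H →L[ℂ] H) (m : ℝ) :
    wilsonDirac cs U 1 m = kineticTerm cs U + cs.γ * massTerm U m := by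
  simp [wilsonDirac, kineticTerm, massTerm]

lemma massTerm_eq (U : Fin d → H →L[ℂ] H) (m : ℝ) :
    massTerm U m = (m : ℂ) • 1 - (2 : ℂ) • defectSum U Finset.univ := by
  simp only [massTerm, yPart_eq, defectSum, Finset.smul_sum]
  rw [add_comm, sub_eq_add_neg, ← Finset.sum_neg_distrib]
  simp

lemma star_massTerm (U : Fin d → H →L[ℂ] H) (m : ℝ) : star (massTerm U m) = massTerm U m := by
  simp [massTerm, star_yPart, star_sum]

lemma CliffordSystem.norm_c_le (cs : CliffordSystem H d) (j : Fin d) : ‖cs.c j‖ ≤ 1 := by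
  have h1 : star (cs.c j) * cs.c j = 1 := by
    have := cs.c_rel j j
    rw [if_pos rfl, ← two_smul ℂ, neg_smul, ← smul_neg] at this
    have h2 := smul_right_injective (H →L[ℂ] H) (two_ne_zero : (2 : ℂ) ≠ 0) this
    rw [cs.c_skew, neg_mul, h2, neg_neg]
  have h2 := CStarRing.norm_star_mul_self (x := cs.c j)
  rw [h1] at h2
  nlinarith [norm_le_one_of_mem_unitary (one_mem (unitary (H →L[ℂ] H))), norm_nonneg (cs.c j)]

lemma CliffordSystem.norm_γ_le (cs : CliffordSystem H d) : ‖cs.γ‖ ≤ 1 := by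
  have h2 := CStarRing.norm_star_mul_self (x := cs.γ)
  rw [cs.γ_sa, cs.γ_sq] at h2
  nlinarith [norm_le_one_of_mem_unitary (one_mem (unitary (H →L[ℂ] H))), norm_nonneg cs.γ]

variable {cs : CliffordSystem H d} {U : Fin d → H →L[ℂ] H}
  (hU : ∀ j, U j ∈ unitary (H →L[ℂ] H)) (hc : ∀ j l, Commute (U j) (cs.c l))
  (hγ : ∀ j, Commute (U j) cs.γ)

include hU in
lemma Commute.massTerm_left {T : H →L[ℂ] H} (h : ∀ j, Commute (U j) T) (m : ℝ) :
    Commute (massTerm U m) T :=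
  (Commute.sum_left _ _ _ fun j _ =>
    ((h j).yPart_left (hU j)).sub_left (Commute.one_left T)).add_left
      ((Commute.one_left T).smul_left _)

include hU hγ in
lemma γ_mul_kineticTerm : cs.γ * kineticTerm cs U = -(kineticTerm cs U * cs.γ) := by
  simp only [kineticTerm, Finset.mul_sum, Finset.sum_mul, ← Finset.sum_neg_distrib]
  refine Finset.sum_congr rfl fun j _ => ?_
  rw [mul_smul_comm, ← mul_assoc, ← ((hγ j).xPart_left (hU j)).eq, mul_assoc, cs.γ_anticomm j]
  simp [mul_assoc]

include hU hc in
lemma star_kineticTerm : star (kineticTerm cs U) = kineticTerm cs U := by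
  rw [kineticTerm, star_sum]
  refine Finset.sum_congr rfl fun j _ => ?_
  rw [star_smul, star_mul, star_xPart, cs.c_skew, ((hc j j).xPart_left (hU j)).eq]
  simp

include hU hc hγ in
lemma isSelfAdjoint_wilsonDirac (m : ℝ) : IsSelfAdjoint (wilsonDirac cs U 1 m) := by
  rw [IsSelfAdjoint, wilsonDirac_one, star_add, star_kineticTerm hU hc, star_mul, cs.γ_sa,
    star_massTerm, (Commute.massTerm_left hU hγ m).eq]

include hU hc in
lemma kineticTerm_mul_self :
    kineticTerm cs U * kineticTerm cs U = ∑ j, xPart (U j) * xPart (U j) +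
      (2⁻¹ : ℂ) • ∑ j, ∑ l, (xPart (U j) * xPart (U l) - xPart (U l) * xPart (U j)) *
        (cs.c l * cs.c j) := by
  set x := fun j => xPart (U j) with hx
  have hxc (j l) : x l * cs.c j = cs.c j * x l := ((hc l j).xPart_left (hU l)).eq
  set f : Fin d → Fin d → H →L[ℂ] H := fun j l => -(x j * x l * (cs.c j * cs.c l)) with hf
  have h1 : kineticTerm cs U * kineticTerm cs U = ∑ j, ∑ l, f j l := by
    rw [kineticTerm, Finset.sum_mul_sum]
    refine Finset.sum_congr rfl fun j _ => Finset.sum_congr rfl fun l _ => ?_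
    rw [smul_mul_smul_comm, Complex.I_mul_I, neg_one_smul]
    change -(x j * cs.c j * (x l * cs.c l)) = -(x j * x l * (cs.c j * cs.c l))
    rw [mul_assoc, ← mul_assoc (cs.c j), ← hxc]
    simp only [mul_assoc]
  have h2 (j l) : f j l + f l j = (if j = l then (2 : ℂ) • (x j * x l) else 0) +
      (x j * x l - x l * x j) * (cs.c l * cs.c j) := by
    have h3 : f j l + f l j = -(x j * x l * (cs.c j * cs.c l + cs.c l * cs.c j)) +
      (x j * x l - x l * x j) * (cs.c l * cs.c j) := by
      simp only [hf]; noncomm_ring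
    rw [h3, cs.c_rel]
    split_ifs <;> simp
  have h4 : kineticTerm cs U * kineticTerm cs U =
      (2⁻¹ : ℂ) • ∑ j, ∑ l, (f j l + f l j) := by
    have h5 : ∑ j, ∑ l, f l j = ∑ j, ∑ l, f j l := Finset.sum_comm
    simp only [Finset.sum_add_distrib, h5, ← h1]
    module
  rw [h4]
  simp only [h2, Finset.sum_add_distrib, Finset.sum_ite_eq, Finset.mem_univ, if_true,
    ← Finset.smul_sum, smul_add, smul_smul, hx]
  norm_num

include hU hγ in
lemma wilsonDirac_mul_self (m : ℝ) :
    wilsonDirac cs U 1 m * wilsonDirac cs U 1 m =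
      kineticTerm cs U * kineticTerm cs U + massTerm U m * massTerm U m +
      cs.γ * (massTerm U m * kineticTerm cs U - kineticTerm cs U * massTerm U m) := by
  have h1 : kineticTerm cs U * cs.γ = -(cs.γ * kineticTerm cs U) := by
    rw [γ_mul_kineticTerm hU hγ, neg_neg]
  have h2 := (Commute.massTerm_left hU hγ m).eq
  rw [wilsonDirac_one]
  generalize massTerm U m = M at *
  generalize kineticTerm cs U = X at *
  have e : (X + cs.γ * M) * (X + cs.γ * M) =
      X * X + cs.γ * M * X + X * cs.γ * M + cs.γ * (M * cs.γ) * M := by noncomm_ring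
  rw [e, h1, h2, ← mul_assoc cs.γ cs.γ, cs.γ_sq]
  noncomm_ring

include hU in
lemma sum_xPart_sq_add_massTerm_sq (m : ℝ) :
    ∑ j, xPart (U j) * xPart (U j) + massTerm U m * massTerm U m =
      ((m ^ 2 : ℝ) : ℂ) • 1 + ((4 * (1 - m) : ℝ) : ℂ) • defectSum U Finset.univ +
        (4 : ℂ) • defectPairs U Finset.univ := by
  have h : ∑ j, xPart (U j) * xPart (U j) = (4 : ℂ) • defectSum U Finset.univ -
      (4 : ℂ) • ∑ j, defectPart (U j) * defectPart (U j) := by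
    rw [defectSum, ← smul_sub, ← Finset.sum_sub_distrib, Finset.smul_sum]
    exact Finset.sum_congr rfl fun j _ => xPart_mul_self (hU j)
  rw [h, massTerm_eq, defectPairs]
  simp only [sub_mul, mul_sub, smul_mul_assoc, mul_smul_comm, one_mul, mul_one]
  push_cast
  module

variable {ε : ℝ} (hε : ∀ j l, ‖U j * U l - U l * U j‖ ≤ ε)

include hU hε in
lemma re_inner_sum_xPart_sq_add_massTerm_sq_ge (hd : 1 ≤ d) {m : ℝ} (hm2 : m < 2)
    (v : H) :
    (min (m ^ 2) ((2 - m) ^ 2) - 24 * d ^ 3 * ε) * ‖v‖ ^ 2 ≤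
      (⟪v, (∑ j, xPart (U j) * xPart (U j) + massTerm U m * massTerm U m) v⟫_ℂ).re := by
  have h0 : 0 ≤ ε := (norm_nonneg _).trans (hε ⟨0, hd⟩ ⟨0, hd⟩)
  have hT := re_inner_defectSum_nonneg hU Finset.univ v
  have hQ := defectPairs_ge hU hε Finset.univ v
  have hE := one_sub_defectSum_add_defectPairs_ge hU hε Finset.univ v
  have hv : (⟪v, v⟫_ℂ).re = ‖v‖ ^ 2 := inner_self_eq_norm_sq (𝕜 := ℂ) v
  rw [sum_xPart_sq_add_massTerm_sq hU]
  simp only [add_apply, sub_apply, smul_apply, inner_add_right, inner_sub_right,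
    inner_smul_right, Complex.add_re, Complex.sub_re, Complex.re_ofReal_mul,
    one_apply_eq_self, hv, Finset.card_univ, Fintype.card_fin] at hE hQ ⊢
  rw [show (4 : ℂ) = ((4 : ℝ) : ℂ) by norm_num, Complex.re_ofReal_mul]
  generalize (⟪v, (defectSum U Finset.univ) v⟫_ℂ).re = T at *
  generalize (⟪v, (defectPairs U Finset.univ) v⟫_ℂ).re = Q at *
  have hd1 : (1 : ℝ) ≤ d := by exact_mod_cast hd
  have hev : 0 ≤ ε * ‖v‖ ^ 2 := by positivity
  have hpow : (d : ℝ) ^ 2 ≤ d ^ 3 := pow_le_pow_right₀ hd1 (by norm_num)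
  have hdQ : -(6 * d ^ 3 * ε * ‖v‖ ^ 2) ≤ Q := by nlinarith
  rcases le_or_gt m 1 with h | h
  · have := mul_le_mul_of_nonneg_right (min_le_left (m ^ 2) ((2 - m) ^ 2)) (sq_nonneg ‖v‖)
    nlinarith [mul_nonneg (sub_nonneg.mpr h) hT]
  · have := mul_le_mul_of_nonneg_right (min_le_right (m ^ 2) ((2 - m) ^ 2)) (sq_nonneg ‖v‖)
    nlinarith [mul_le_mul_of_nonneg_left hE (sub_nonneg.mpr h.le),
      mul_le_mul_of_nonneg_left hdQ (sub_nonneg.mpr hm2.le)]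

include hU hc hγ hε in
lemma wilsonDirac_gap (hd : 1 ≤ d) {m : ℝ} (hm2 : m < 2) (v : H) :
    (min (m ^ 2) ((2 - m) ^ 2) - 27 * d ^ 3 * ε) * ‖v‖ ^ 2 ≤ ‖wilsonDirac cs U 1 m v‖ ^ 2 := by
  have h0 : 0 ≤ ε := (norm_nonneg _).trans (hε ⟨0, hd⟩ ⟨0, hd⟩)
  have hmain := re_inner_sum_xPart_sq_add_massTerm_sq_ge hU hε hd hm2 v
  set R := (2⁻¹ : ℂ) • ∑ j, ∑ l, (xPart (U j) * xPart (U l) - xPart (U l) * xPart (U j)) *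
    (cs.c l * cs.c j) with hR
  set S := cs.γ * (massTerm U m * kineticTerm cs U - kineticTerm cs U * massTerm U m) with hS
  have hRn : ‖R‖ ≤ d ^ 2 * ε := by
    have h1 (j l) : ‖(xPart (U j) * xPart (U l) - xPart (U l) * xPart (U j)) *
        (cs.c l * cs.c j)‖ ≤ ε := by
      have h2 : ‖xPart (U j) * xPart (U l) - xPart (U l) * xPart (U j)‖ ≤ ε := by
        refine (norm_xPart_commutator_le (hU j) _).trans ?_
        rw [norm_sub_rev]
        refine (norm_xPart_commutator_le (hU l) _).trans (hε l j)
      have h3 : ‖cs.c l * cs.c j‖ ≤ 1 :=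
        (norm_mul_le _ _).trans (mul_le_one₀ (cs.norm_c_le l) (norm_nonneg _) (cs.norm_c_le j))
      calc _ ≤ _ := norm_mul_le _ _
        _ ≤ ε * 1 := mul_le_mul h2 h3 (norm_nonneg _) h0
        _ = ε := mul_one ε
    have h4 := norm_sum_le_of_le Finset.univ fun j _ =>
      norm_sum_le_of_le Finset.univ fun l _ => h1 j l
    simp only [Finset.sum_const, Finset.card_univ, Fintype.card_fin, nsmul_eq_mul] at h4
    rw [hR, norm_smul]
    norm_num
    nlinarith [norm_nonneg (∑ j, ∑ l, (xPart (U j) * xPart (U l) - xPart (U l) * xPart (U j)) *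
      (cs.c l * cs.c j))]
  have hSn : ‖S‖ ≤ 2 * d ^ 2 * ε := by
    set T := defectSum U Finset.univ with hT
    have h1 (j) : ‖Complex.I • (xPart (U j) * cs.c j) * T - T * Complex.I • (xPart (U j) * cs.c j)‖
        ≤ d * ε := by
      have hTc : T * cs.c j = cs.c j * T := by
        refine (Commute.sum_left _ _ _ fun l _ => ?_).eq
        exact ((Commute.one_left _).sub_left ((hc l j).yPart_left (hU l))).smul_left _
      have e : Complex.I • (xPart (U j) * cs.c j) * T - T * Complex.I • (xPart (U j) * cs.c j) =
          Complex.I • ((xPart (U j) * T - T * xPart (U j)) * cs.c j) := by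
        rw [smul_mul_assoc, mul_smul_comm, ← smul_sub, mul_assoc, ← hTc]
        noncomm_ring
      have h2 : ‖xPart (U j) * T - T * xPart (U j)‖ ≤ d * ε := by
        refine (norm_xPart_commutator_le (hU j) _).trans ?_
        rw [norm_sub_rev]
        simpa using norm_defectSum_commutator_le hU hε Finset.univ j
      rw [e, norm_smul, Complex.norm_I, one_mul]
      calc _ ≤ _ := norm_mul_le _ _
        _ ≤ (d * ε) * 1 := mul_le_mul h2 (cs.norm_c_le j) (norm_nonneg _) (by positivity)
        _ = d * ε := mul_one _
    have h3 := norm_sum_commutator_le Finset.univ _ T fun j _ => h1 j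
    rw [← kineticTerm, Finset.card_univ, Fintype.card_fin] at h3
    have e : massTerm U m * kineticTerm cs U - kineticTerm cs U * massTerm U m =
        (2 : ℂ) • (kineticTerm cs U * T - T * kineticTerm cs U) := by
      rw [massTerm_eq]
      simp only [sub_mul, mul_sub, smul_mul_assoc, mul_smul_comm, one_mul, mul_one]
      module
    have h4 : ‖massTerm U m * kineticTerm cs U - kineticTerm cs U * massTerm U m‖ ≤
        2 * d ^ 2 * ε := by
      rw [e, norm_smul]
      norm_num
      linarith
    calc _ ≤ _ := norm_mul_le _ _
      _ ≤ 1 * (2 * d ^ 2 * ε) := mul_le_mul cs.norm_γ_le h4 (norm_nonneg _) zero_le_one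
      _ = _ := one_mul _
  have hD := re_inner_star_mul_self (wilsonDirac cs U 1 m) v
  rw [(isSelfAdjoint_wilsonDirac hU hc hγ m).star_eq, wilsonDirac_mul_self hU hγ,
    kineticTerm_mul_self hU hc, ← hR, ← hS, add_right_comm _ R, add_apply, add_apply _ R,
    inner_add_right, inner_add_right, Complex.add_re, Complex.add_re] at hD
  have h1 := neg_norm_mul_le_re_inner R v
  have h2 := neg_norm_mul_le_re_inner S v
  have h3 := mul_le_mul_of_nonneg_right hRn (sq_nonneg ‖v‖)
  have h4 := mul_le_mul_of_nonneg_right hSn (sq_nonneg ‖v‖)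
  have hd1 : (1 : ℝ) ≤ d := by exact_mod_cast hd
  have hpow : (d : ℝ) ^ 2 ≤ d ^ 3 := pow_le_pow_right₀ hd1 (by norm_num)
  have hev : 0 ≤ ε * ‖v‖ ^ 2 := by positivity
  have h5 := mul_le_mul_of_nonneg_right hpow hev
  linarith

end WilsonDirac

section Vanishing

/-- An operator built from anticommuting generators `G`, `γ` that anticommutes with
`X + γ * M`. -/
lemma anticommute_of_clifford_relations {A : Type*} [Ring A] {X γ M x G : A}
    (hXM : X * M = M * X) (hγM : γ * M = M * γ) (hxM : x * M = M * x) (hGM : G * M = M * G)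
    (hXx : X * x = x * X) (hγx : γ * x = x * γ)
    (hXγ : X * γ = -(γ * X)) (hGγ : G * γ = -(γ * G)) (hXG : X * G = 2 * x - G * X)
    (hγγ : γ * γ = 1) :
    (M * G - x * γ) * (X + γ * M) = -((X + γ * M) * (M * G - x * γ)) := by
  have e1 : (M * G - x * γ) * (X + γ * M) =
      M * (G * X) + M * (G * γ) * M - x * (γ * X) - x * (γ * γ) * M := by noncomm_ring
  have e2 : (X + γ * M) * (M * G - x * γ) =
      (X * M) * G - (X * x) * γ + (γ * M) * M * G - (γ * M) * x * γ := by noncomm_ring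
  have e3 : M * (γ * G) * M = M * M * γ * G := by
    rw [mul_assoc, mul_assoc γ, hGM, ← mul_assoc γ, hγM]; noncomm_ring
  have e4 : M * γ * M * G = M * M * γ * G := by rw [mul_assoc M γ, hγM]; noncomm_ring
  have e5 : M * γ * x * γ = M * x := by
    rw [mul_assoc M γ, hγx, mul_assoc, mul_assoc x, hγγ, mul_one]
  have e6 : M * X * G = 2 * (M * x) - M * (G * X) := by rw [mul_assoc, hXG]; noncomm_ring
  have e7 : x * X * γ = -(x * (γ * X)) := by rw [mul_assoc, hXγ, mul_neg]
  rw [e1, e2, hXM, hXx, hγM, hGγ, hγγ, mul_one, hxM, e4, e5, e6, e7, mul_neg, neg_mul, e3]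
  noncomm_ring

lemma clifford_combination_mul_self {A : Type*} [Ring A] {γ M x G : A}
    (hγM : γ * M = M * γ) (hxM : x * M = M * x) (hGM : G * M = M * G)
    (hγx : γ * x = x * γ) (hGx : G * x = x * G)
    (hGγ : G * γ = -(γ * G)) (hγγ : γ * γ = 1) (hGG : G * G = 1) :
    (M * G - x * γ) * (M * G - x * γ) = x * x + M * M := by
  have e : (M * G - x * γ) * (M * G - x * γ) =
      M * (G * M) * G - M * (G * x) * γ - x * (γ * M) * G + x * (γ * x) * γ := by noncomm_ring
  have e1 : M * (M * G) * G = M * M := by rw [mul_assoc, mul_assoc, hGG, mul_one]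
  have e2 : x * (x * γ) * γ = x * x := by rw [mul_assoc, mul_assoc, hγγ, mul_one]
  have e3 : M * (x * G) * γ = -(M * x * (γ * G)) := by
    rw [← mul_assoc, mul_assoc, hGγ, mul_neg]
  have e4 : x * (M * γ) * G = M * x * (γ * G) := by rw [← mul_assoc, hxM, mul_assoc]
  rw [e, hGM, hGx, hγM, hγx, e1, e2, e3, e4]
  abel

variable {H : Type*} [NormedAddCommGroup H] [InnerProductSpace ℂ H] [CompleteSpace H]

lemma eq_zero_of_sq_add_sq_mul_eq_zero {x M P : H →L[ℂ] H} (hx : star x = x) (hM : star M = M)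
    (h : (x * x + M * M) * P = 0) : x * P = 0 ∧ M * P = 0 := by
  have key (v : H) : ‖x (P v)‖ ^ 2 + ‖M (P v)‖ ^ 2 = 0 := by
    have h1 := re_inner_star_mul_self x (P v)
    have h2 := re_inner_star_mul_self M (P v)
    rw [hx] at h1
    rw [hM] at h2
    have h3 : (x * x + M * M) (P v) = 0 := congrArg (fun T : H →L[ℂ] H => T v) h
    rw [← h1, ← h2, ← Complex.add_re, ← inner_add_right, ← add_apply, h3, inner_zero_right,
      Complex.zero_re]
  constructor <;> ext v
  · have : ‖x (P v)‖ ^ 2 = 0 := by nlinarith [key v, sq_nonneg ‖x (P v)‖, sq_nonneg ‖M (P v)‖]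
    simpa using this
  · have : ‖M (P v)‖ ^ 2 = 0 := by nlinarith [key v, sq_nonneg ‖x (P v)‖, sq_nonneg ‖M (P v)‖]
    simpa using this

variable [FiniteDimensional ℂ H]

/-- The kernel projection of a self-adjoint operator, as an element of its bicommutant. -/
lemma exists_kernel_projection {N : H →L[ℂ] H} (hN : IsSelfAdjoint N) :
    ∃ P : H →L[ℂ] H, N * P = 0 ∧ IsUnit (N + P * P) ∧ ∀ T, Commute N T → Commute P T := by
  have hfin : (spectrum ℝ N).Finite := by
    rw [← spectrum.preimage_algebraMap ℂ]
    have hsub : spectrum ℂ N ⊆ spectrum ℂ N.toLinearMap := fun z hz hz' =>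
      hz (ContinuousLinearMap.isUnit_iff_bijective.mpr ((Module.End.isUnit_iff _).mp hz'))
    exact ((Module.End.finite_spectrum N.toLinearMap).subset hsub).preimage
      (FaithfulSMul.algebraMap_injective ℝ ℂ).injOn
  have hcont (f : ℝ → ℝ) : ContinuousOn f (spectrum ℝ N) := hfin.continuousOn f
  let f : ℝ → ℝ := fun t => if t = 0 then 1 else 0
  refine ⟨cfc f N, ?_, ?_, fun T hT => hN.commute_cfc hT f⟩
  · nth_rw 1 [← cfc_id ℝ N]
    rw [← cfc_mul _ _ N (hcont _) (hcont _)]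
    convert cfc_const_zero ℝ N using 2
    ext t
    by_cases h : t = 0 <;> simp [f, h]
  · nth_rw 1 [← cfc_id ℝ N]
    rw [← cfc_mul _ _ N (hcont _) (hcont _), ← cfc_add N _ _ (hcont _) (hcont _),
      isUnit_cfc_iff _ _ (hcont _)]
    intro t _
    by_cases h : t = 0 <;> simp [f, h]

/-- The index of the Wilson-Dirac operator of commuting unitaries vanishes. -/
lemma Ind_wilsonDirac_eq_zero_of_commute {d : ℕ} (hd : 1 ≤ d) {cs : CliffordSystem H d}
    {U : Fin d → H →L[ℂ] H} (hU : ∀ j, U j ∈ unitary (H →L[ℂ] H))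
    (hc : ∀ j l, Commute (U j) (cs.c l)) (hγ : ∀ j, Commute (U j) cs.γ)
    (hcomm : ∀ j l, Commute (U j) (U l)) (m : ℝ) : Ind (wilsonDirac cs U 1 m) = 0 := by
  let i : Fin d := ⟨0, hd⟩
  set x := xPart (U i) with hx
  set M := massTerm U m with hM
  set X := kineticTerm cs U with hX
  set G := Complex.I • cs.c i with hG
  have hγx : Commute x cs.γ := (hγ i).xPart_left (hU i)
  have hcx (l) : Commute x (cs.c l) := (hc i l).xPart_left (hU i)
  have hxx (l) : Commute x (xPart (U l)) :=
    (((hcomm l i).xPart_left (hU l)).symm).xPart_left (hU i)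
  have hMx (l) : Commute M (xPart (U l)) :=
    Commute.massTerm_left hU (fun j => ((hcomm l j).xPart_left (hU l)).symm) m
  have hMc (l) : Commute M (cs.c l) := Commute.massTerm_left hU (fun j => hc j l) m
  have hMγ : Commute M cs.γ := Commute.massTerm_left hU hγ m
  have hMX : Commute M X :=
    Commute.sum_right _ _ _ fun j _ => ((hMx j).mul_right (hMc j)).smul_right _
  have hxX : Commute x X :=
    Commute.sum_right _ _ _ fun j _ => ((hxx j).mul_right (hcx j)).smul_right _
  have hMG : Commute M G := (hMc i).smul_right _
  have hxG : Commute x G := (hcx i).smul_right _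
  have hXγ : X * cs.γ = -(cs.γ * X) := by rw [hX, γ_mul_kineticTerm hU hγ, neg_neg]
  have hGγ : G * cs.γ = -(cs.γ * G) := by
    rw [hG, mul_smul_comm, cs.γ_anticomm, smul_mul_assoc, smul_neg, neg_neg]
  have hGc (j) : cs.c j * G + G * cs.c j = if j = i then (-2 * Complex.I) • 1 else 0 := by
    rw [hG, mul_smul_comm, smul_mul_assoc, ← smul_add, cs.c_rel]
    split_ifs
    · rw [smul_smul, mul_comm]
    · rw [smul_zero]
  have hGG : G * G = 1 := by
    have h1 := congrArg (fun T => (Complex.I * 2⁻¹) • T) (hGc i)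
    have h2 : cs.c i * G = G * cs.c i := by rw [hG, mul_smul_comm, smul_mul_assoc]
    simp only [if_pos, smul_smul, h2] at h1
    have h3 : Complex.I * 2⁻¹ * (-2 * Complex.I) = 1 := by
      linear_combination (-1 : ℂ) * Complex.I_mul_I
    rw [h3, one_smul, ← two_smul ℂ, smul_smul, mul_assoc, inv_mul_cancel₀ two_ne_zero, mul_one]
      at h1
    rw [← h1]
    nth_rw 2 [hG]
    rw [mul_smul_comm]
  have hterm (j) : Complex.I • (xPart (U j) * cs.c j) * G + G * Complex.I • (xPart (U j) * cs.c j) =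
      Complex.I • (xPart (U j) * if j = i then (-2 * Complex.I) • 1 else 0) := by
    have hxjG : Commute (xPart (U j)) G := ((hc j i).xPart_left (hU j)).smul_right _
    rw [smul_mul_assoc, mul_smul_comm _ G, ← mul_assoc G, ← hxjG.eq, mul_assoc, mul_assoc, ← smul_add,
      ← mul_add, hGc]
  have hXG : X * G = 2 * x - G * X := by
    rw [eq_sub_iff_add_eq, hX, kineticTerm, Finset.sum_mul, Finset.mul_sum,
      ← Finset.sum_add_distrib, Finset.sum_eq_single i]
    · rw [hterm, if_pos rfl, mul_smul_comm, mul_one, smul_smul, two_mul, ← two_smul ℂ]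
      congr 1
      linear_combination (-2 : ℂ) * Complex.I_mul_I
    · intro j _ hj
      rw [hterm, if_neg hj, mul_zero, smul_zero]
    · simp
  have hNsa : IsSelfAdjoint (x * x + M * M) := by
    rw [IsSelfAdjoint, star_add, star_mul, star_mul, star_xPart, star_massTerm]
  obtain ⟨P, hNP, hunit, hP⟩ := exists_kernel_projection hNsa
  obtain ⟨hxP, hMP⟩ := eq_zero_of_sq_add_sq_mul_eq_zero (star_xPart _) (star_massTerm _ _) hNP
  have hcommP {T : H →L[ℂ] H} (h1 : Commute x T) (h2 : Commute M T) : Commute P T :=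
    hP T ((h1.mul_left h1).add_left (h2.mul_left h2))
  have hPγ := hcommP hγx hMγ
  have hPX := hcommP hxX hMX
  have hPM := hcommP (hMx i).symm (Commute.refl M)
  have hPx := hcommP (Commute.refl x) (hMx i)
  have hPG := hcommP hxG hMG
  have hW := anticommute_of_clifford_relations hMX.symm.eq hMγ.symm.eq (hMx i).symm.eq
    hMG.symm.eq hxX.symm.eq hγx.symm.eq hXγ hGγ hXG cs.γ_sq
  have hWsq : _ = x * x + M * M := clifford_combination_mul_self hMγ.symm.eq (hMx i).symm.eq
    hMG.symm.eq hγx.symm.eq hxG.symm.eq hGγ cs.γ_sq hGG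
  set W := M * G - x * cs.γ with hWdef
  have hPW : P * W = 0 := by
    rw [hWdef, mul_sub, ← mul_assoc, ← mul_assoc, hPM.eq, hPx.eq, hMP, hxP, zero_mul, zero_mul,
      sub_zero]
  have hWP : W * P = 0 := by
    rw [hWdef, sub_mul, mul_assoc, mul_assoc, ← hPG.eq, ← hPγ.eq, ← mul_assoc, ← mul_assoc,
      hMP, hxP, zero_mul, zero_mul, sub_zero]
  have hsq : (W + cs.γ * P) * (W + cs.γ * P) = x * x + M * M + P * P := by
    have e : (W + cs.γ * P) * (W + cs.γ * P) =
        W * W + W * (cs.γ * P) + cs.γ * (P * W) + cs.γ * (P * cs.γ) * P := by noncomm_ring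
    rw [e, hWsq, hPW, hPγ.eq, ← hPγ.eq, ← mul_assoc W, hWP, hPγ.eq, ← mul_assoc cs.γ, cs.γ_sq]
    simp
  refine Ind_eq_zero_of_anticommute (W := W + cs.γ * P) ?_ ?_
  · rw [← hsq, ContinuousLinearMap.isUnit_iff_bijective] at hunit
    intro v w hvw
    refine hunit.1 ?_
    simp only [mul_apply_eq_comp]
    rw [hvw]
  · have h1 : cs.γ * P * (X + cs.γ * M) = -((X + cs.γ * M) * (cs.γ * P)) := by
      have e1 : cs.γ * P * (X + cs.γ * M) = cs.γ * (P * X) + cs.γ * (P * cs.γ) * M := by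
        noncomm_ring
      have e2 : (X + cs.γ * M) * (cs.γ * P) = X * cs.γ * P + cs.γ * (M * cs.γ) * P := by
        noncomm_ring
      rw [e1, e2, hPX.eq, hPγ.eq, hMγ.eq, hXγ, ← mul_assoc cs.γ cs.γ, ← mul_assoc cs.γ cs.γ,
        cs.γ_sq, one_mul, one_mul, hPM.eq, hMP]
      noncomm_ring
    rw [wilsonDirac_one, add_mul, hW, h1, mul_add, neg_add]

end Vanishing

/-- `𝐈(D(1,m))` is a homotopy invariant of paths of `ε`-commuting unitary
tuples, and vanishes if the tuple can be connected to a commuting tuple. -/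
theorem statement7 (d : ℕ) (hd : 1 ≤ d) (m : ℝ) (hm0 : 0 < m) (hm2 : m < 2) :
    ∃ ε > (0 : ℝ), ∀ (H : Type) [NormedAddCommGroup H] [InnerProductSpace ℂ H]
      [FiniteDimensional ℂ H],
      ∀ (cs : CliffordSystem H d) (U : ℝ → Fin d → H →L[ℂ] H),
        (∀ j, ContinuousOn (fun t => U t j) (Set.Icc (0 : ℝ) 1)) →
        (∀ t ∈ Set.Icc (0 : ℝ) 1, ∀ j, U t j ∈ unitary (H →L[ℂ] H)) →
        (∀ t ∈ Set.Icc (0 : ℝ) 1, ∀ j l, Commute (U t j) (cs.c l)) →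
        (∀ t ∈ Set.Icc (0 : ℝ) 1, ∀ j, Commute (U t j) cs.γ) →
        (∀ t ∈ Set.Icc (0 : ℝ) 1, ∀ j l, ‖U t j * U t l - U t l * U t j‖ < ε) →
        (∀ t ∈ Set.Icc (0 : ℝ) 1, IsUnit (wilsonDirac cs (U t) 1 m)) ∧
        (∀ t ∈ Set.Icc (0 : ℝ) 1, ∀ s ∈ Set.Icc (0 : ℝ) 1,
          Ind (wilsonDirac cs (U t) 1 m) = Ind (wilsonDirac cs (U s) 1 m)) ∧
        ((∀ j l, Commute (U 1 j) (U 1 l)) → Ind (wilsonDirac cs (U 0) 1 m) = 0) := by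
  set δ := min (m ^ 2) ((2 - m) ^ 2) with hδ
  have hδ0 : 0 < δ := lt_min (pow_pos hm0 2) (pow_pos (sub_pos.mpr hm2) 2)
  have hd0 : (0 : ℝ) < d := by exact_mod_cast hd
  refine ⟨δ / (54 * d ^ 3), by positivity, ?_⟩
  intro H _ _ _ cs U hcont hU hc hγ hε
  set g := Real.sqrt (δ / 2) with hg
  have hg0 : 0 < g := Real.sqrt_pos.mpr (by positivity)
  have hgap (t) (ht : t ∈ Set.Icc (0 : ℝ) 1) (v : H) :
      g * ‖v‖ ≤ ‖wilsonDirac cs (U t) 1 m v‖ := by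
    have h := wilsonDirac_gap (hU t ht) (hc t ht) (hγ t ht) (fun j l => (hε t ht j l).le) hd hm2 v
    rw [← hδ, show 27 * (d : ℝ) ^ 3 * (δ / (54 * d ^ 3)) = δ / 2 by field_simp; norm_num,
      sub_half] at h
    refine abs_le_of_sq_le_sq' ?_ (norm_nonneg _) |>.2
    rwa [mul_pow, hg, Real.sq_sqrt (by positivity)]
  have hsa (t) (ht : t ∈ Set.Icc (0 : ℝ) 1) : IsSelfAdjoint (wilsonDirac cs (U t) 1 m) :=
    isSelfAdjoint_wilsonDirac (hU t ht) (hc t ht) (hγ t ht) m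
  have hDcont : ContinuousOn (fun t => wilsonDirac cs (U t) 1 m) (Set.Icc (0 : ℝ) 1) := by
    have := fun j => continuous_star.comp_continuousOn (hcont j)
    simp only [Function.comp_def] at this
    unfold wilsonDirac xPart yPart
    fun_prop
  have hconst : ∀ t ∈ Set.Icc (0 : ℝ) 1, ∀ s ∈ Set.Icc (0 : ℝ) 1,
      Ind (wilsonDirac cs (U t) 1 m) = Ind (wilsonDirac cs (U s) 1 m) := by
    intro t ht s hs
    refine isPreconnected_Icc.induction₂
      (fun t s => Ind (wilsonDirac cs (U t) 1 m) = Ind (wilsonDirac cs (U s) 1 m))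
      (fun t ht => ?_) (fun _ _ _ _ _ _ h1 h2 => h1.trans h2) (fun _ _ _ _ h => h.symm) ht hs
    filter_upwards [(hDcont t ht).eventually (Metric.ball_mem_nhds _ hg0), self_mem_nhdsWithin]
      with s hs hs'
    refine Ind_eq_of_norm_sub_lt (hsa t ht) (hsa s hs') hg0 (hgap t ht) (hgap s hs') ?_
    rwa [← dist_eq_norm, dist_comm]
  refine ⟨fun t ht => ?_, hconst, fun hcomm => ?_⟩
  · have hinj : Function.Injective (wilsonDirac cs (U t) 1 m) := by
      rw [injective_iff_map_eq_zero]
      intro v hv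
      have h := hgap t ht v
      rw [hv, norm_zero] at h
      exact norm_le_zero_iff.mp (nonpos_of_mul_nonpos_right h hg0)
    exact ContinuousLinearMap.isUnit_iff_bijective.mpr
      ⟨hinj, LinearMap.injective_iff_surjective.mp hinj⟩
  · have h1 : (1 : ℝ) ∈ Set.Icc (0 : ℝ) 1 := by simp
    rw [hconst 0 (by simp) 1 h1]
    exact Ind_wilsonDirac_eq_zero_of_commute hd (hU 1 h1) (hc 1 h1) (hγ 1 h1) hcomm m
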